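/- Explicit fourth-derivative integral of the quintic Townes soliton (Appendix D): Let R(y) := 3^{1/4} (sech(2y))^{1/2}, the positive solution of −R'' + R − R⁵ = 0 on ℝ, and let G(y) := −(1/2)(R(y)/2 + y R'(y)). Then ∫_ℝ R''''(y) · G(y) dy = −(11√3/16) π, where R'''' is the fourth derivative of R. Equivalently, ∫_ℝ R''''(y) (R(y)/2 + y R'(y)) dy = (11√3/8) π. -/

import Mathlib

open Real

lemma aux_s (y : ℝ) : HasDerivAt (fun y : ℝ => 1 / cosh (2 * y))
    (-2 * (1 / cosh (2 * y)) * (sinh (2 * y) / cosh (2 * y))) y := by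
  have h2 : HasDerivAt (fun y : ℝ => 2 * y) 2 y := by
    simpa using (hasDerivAt_id y).const_mul (2 : ℝ)
  have hc := h2.cosh
  have hne := (cosh_pos (2 * y)).ne'
  have h := (hasDerivAt_const y (1 : ℝ)).div hc hne
  refine h.congr_deriv ?_
  field_simp
  ring

lemma aux_t (y : ℝ) : HasDerivAt (fun y : ℝ => sinh (2 * y) / cosh (2 * y))
    (2 * (1 - (sinh (2 * y) / cosh (2 * y)) ^ 2)) y := by
  have h2 : HasDerivAt (fun y : ℝ => 2 * y) 2 y := by
    simpa using (hasDerivAt_id y).const_mul (2 : ℝ)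
  have hne := (cosh_pos (2 * y)).ne'
  have h := h2.sinh.div h2.cosh hne
  refine h.congr_deriv ?_
  field_simp

lemma aux_g (y : ℝ) : HasDerivAt (fun y : ℝ => arctan (sinh (2 * y)))
    (2 * (1 / cosh (2 * y))) y := by
  have h2 : HasDerivAt (fun y : ℝ => 2 * y) 2 y := by
    simpa using (hasDerivAt_id y).const_mul (2 : ℝ)
  have hne := (cosh_pos (2 * y)).ne'
  have h := h2.sinh.arctan
  refine h.congr_deriv ?_
  rw [show 1 + sinh (2 * y) ^ 2 = cosh (2 * y) ^ 2 by rw [cosh_sq]; ring]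
  field_simp

lemma aux_tb (y : ℝ) : |sinh (2 * y) / cosh (2 * y)| ≤ 1 := by
  rw [abs_le_one_iff_mul_self_le_one]
  have hp := cosh_pos (2 * y)
  have := cosh_sq (2 * y)
  rw [div_mul_div_comm, div_le_one (by positivity)]
  nlinarith

lemma aux_cosh (y : ℝ) : 1 + y ^ 2 / 2 ≤ cosh y := by
  have h := cosh_two_mul (y / 2)
  have h1 := cosh_sq (y / 2)
  have h2 : (y / 2) ^ 2 ≤ sinh (y / 2) ^ 2 := by
    rw [sq_le_sq]
    rcases le_total 0 (y / 2) with h | h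
    · rw [abs_of_nonneg h]
      exact (self_le_sinh_iff.2 h).trans (le_abs_self _)
    · rw [abs_of_nonpos h]
      have := sinh_le_self_iff.2 h
      exact (neg_le_neg this).trans (neg_le_abs _)
  rw [show 2 * (y / 2) = y by ring] at h
  nlinarith

/-- decay -/
lemma aux_dec (y : ℝ) : (1 + |y|) * (1 / cosh (2 * y)) ≤ 4 * (1 + y ^ 2)⁻¹ := by
  have h := aux_cosh y
  have h1 := cosh_two_mul y
  have h2 := cosh_sq y
  have h3 : |y| ≤ 1 / 2 + y ^ 2 / 2 := by
    nlinarith [sq_abs y, sq_nonneg (|y| - 1)]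
  have h4 : cosh y ^ 2 ≤ cosh (2 * y) := by nlinarith [sq_nonneg (sinh y)]
  have hp := cosh_pos y
  have hp2 := cosh_pos (2 * y)
  rw [mul_one_div, ← div_eq_mul_inv, div_le_div_iff₀ hp2 (by positivity)]
  have h5 : 1 + |y| ≤ 2 * cosh y := by nlinarith
  have h6 : 1 + y ^ 2 ≤ 2 * cosh y := by nlinarith
  calc (1 + |y|) * (1 + y ^ 2) ≤ (2 * cosh y) * (2 * cosh y) := by
        gcongr
    _ ≤ _ := by nlinarith

lemma aux_ys_top : ∀ l : Filter ℝ, Filter.Tendsto (fun y : ℝ => 4 * (1 + y ^ 2)⁻¹) l (nhds 0) →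
    ∀ a b : ℝ → ℝ, (∃ C, ∀ y, |a y| ≤ C ∧ |b y| ≤ C) →
    Filter.Tendsto (fun y : ℝ => (a y + y * b y) * (1 / cosh (2 * y))) l (nhds 0) := by
  rintro l hl a b ⟨C, hC⟩
  have hl' := hl.const_mul C
  rw [mul_zero] at hl'
  refine squeeze_zero_norm (fun y => ?_) hl'
  have hp : 0 < 1 / cosh (2 * y) := by have := cosh_pos (2 * y); positivity
  rw [norm_mul, Real.norm_eq_abs, Real.norm_eq_abs, abs_of_pos hp]
  have hC0 : 0 ≤ C := (abs_nonneg _).trans (hC y).1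
  calc |a y + y * b y| * (1 / cosh (2 * y)) ≤ (C * (1 + |y|)) * (1 / cosh (2 * y)) := by
        gcongr
        have := abs_add_le (a y) (y * b y)
        rw [abs_mul] at this
        nlinarith [(hC y).1, mul_le_mul_of_nonneg_left (hC y).2 (abs_nonneg y)]
    _ = C * ((1 + |y|) * (1 / cosh (2 * y))) := by ring
    _ ≤ _ := mul_le_mul_of_nonneg_left (aux_dec y) hC0

lemma aux_int (a b : ℝ → ℝ) (ha : Continuous a) (hb : Continuous b)
    (h : ∃ C, ∀ y, |a y| ≤ C ∧ |b y| ≤ C) :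
    MeasureTheory.Integrable (fun y : ℝ => (a y + y * b y) * (1 / cosh (2 * y))) := by
  obtain ⟨C, hC⟩ := h
  have hI : MeasureTheory.Integrable (fun y : ℝ => C * (4 * (1 + y ^ 2)⁻¹)) :=
    (integrable_inv_one_add_sq.const_mul 4).const_mul C
  refine hI.mono' ?_ ?_
  · apply Continuous.aestronglyMeasurable
    have : Continuous fun y : ℝ => 1 / cosh (2 * y) :=
      continuous_iff_continuousAt.2 fun y => (aux_s y).continuousAt
    fun_prop
  · refine Filter.Eventually.of_forall fun y => ?_
    have hp : 0 < 1 / cosh (2 * y) := by have := cosh_pos (2 * y); positivity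
    rw [norm_mul, Real.norm_eq_abs, Real.norm_eq_abs, abs_of_pos hp]
    have hC0 : 0 ≤ C := (abs_nonneg _).trans (hC y).1
    calc |a y + y * b y| * (1 / cosh (2 * y)) ≤ (C * (1 + |y|)) * (1 / cosh (2 * y)) := by
          gcongr
          have := abs_add_le (a y) (y * b y)
          rw [abs_mul] at this
          nlinarith [(hC y).1, mul_le_mul_of_nonneg_left (hC y).2 (abs_nonneg y)]
      _ = C * ((1 + |y|) * (1 / cosh (2 * y))) := by ring
      _ ≤ _ := mul_le_mul_of_nonneg_left (aux_dec y) hC0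

/-- polynomials in a bounded quantity are bounded -/
lemma aux_bd (p q : Polynomial ℝ) (t : ℝ → ℝ) (ht : ∀ y, |t y| ≤ 1) :
    ∃ C, ∀ y, |p.eval (t y)| ≤ C ∧ |q.eval (t y)| ≤ C := by
  obtain ⟨C, hC⟩ := (isCompact_Icc (a := (-1 : ℝ)) (b := 1)).exists_bound_of_continuousOn
    p.continuous.continuousOn
  obtain ⟨D, hD⟩ := (isCompact_Icc (a := (-1 : ℝ)) (b := 1)).exists_bound_of_continuousOn
    q.continuous.continuousOn
  exact ⟨max C D, fun y => ⟨(hC _ (abs_le.1 (ht y))).trans (le_max_left _ _),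
    (hD _ (abs_le.1 (ht y))).trans (le_max_right _ _)⟩⟩

lemma aux_R (R : ℝ → ℝ)
    (hR : ∀ y : ℝ, R y = 3 ^ ((1 : ℝ) / 4) * (1 / Real.cosh (2 * y)) ^ ((1 : ℝ) / 2)) (y : ℝ) :
    HasDerivAt R (-(sinh (2 * y) / cosh (2 * y)) * R y) y := by
  have hp : 0 < 1 / cosh (2 * y) := by have := cosh_pos (2 * y); positivity
  have h := ((aux_s y).rpow_const (p := (1 : ℝ) / 2) (Or.inl hp.ne')).const_mul
    ((3 : ℝ) ^ ((1 : ℝ) / 4))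
  have e : R = fun y => 3 ^ ((1 : ℝ) / 4) * (1 / Real.cosh (2 * y)) ^ ((1 : ℝ) / 2) := funext hR
  rw [e]
  refine h.congr_deriv ?_
  rw [rpow_sub_one hp.ne']
  have := hp.ne'
  beta_reduce
  generalize (1 / cosh (2 * y)) = s at *
  field_simp

lemma aux_step (R : ℝ → ℝ) (t : ℝ → ℝ)
    (ht : ∀ y, HasDerivAt t (2 * (1 - t y ^ 2)) y)
    (hR : ∀ y, HasDerivAt R (-(t y) * R y) y) :
    deriv R = (fun y => -(t y) * R y) ∧
    deriv^[4] R = fun y => (28 - 132 * t y ^ 2 + 105 * t y ^ 4) * R y := by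
  have d1 : deriv R = fun y => -(t y) * R y := funext fun y => (hR y).deriv
  have d2 : deriv (fun y => -(t y) * R y) = fun y => (3 * t y ^ 2 - 2) * R y := by
    funext y
    rw [((ht y).fun_neg.fun_mul (hR y)).deriv]
    ring
  have d3 : deriv (fun y => (3 * t y ^ 2 - 2) * R y)
      = fun y => (14 * t y - 15 * t y ^ 3) * R y := by
    funext y
    rw [(((((ht y).fun_pow 2).const_mul 3).sub_const 2).fun_mul (hR y)).deriv]
    push_cast
    ring
  have d4 : deriv (fun y => (14 * t y - 15 * t y ^ 3) * R y)
      = fun y => (28 - 132 * t y ^ 2 + 105 * t y ^ 4) * R y := by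
    funext y
    rw [((((ht y).const_mul 14).fun_sub (((ht y).fun_pow 3).const_mul 15)).fun_mul (hR y)).deriv]
    push_cast
    ring
  refine ⟨d1, ?_⟩
  simp only [Function.iterate_succ, Function.iterate_zero, Function.comp, id, d1, d2, d3, d4]

lemma aux_main : ∫ y : ℝ, ((28 - 132 * (sinh (2 * y) / cosh (2 * y)) ^ 2
      + 105 * (sinh (2 * y) / cosh (2 * y)) ^ 4) / 2
      + y * (-(sinh (2 * y) / cosh (2 * y)) * (28 - 132 * (sinh (2 * y) / cosh (2 * y)) ^ 2
      + 105 * (sinh (2 * y) / cosh (2 * y)) ^ 4))) * (1 / cosh (2 * y)) = 11 / 8 * π := by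
  obtain ⟨t, ht⟩ : ∃ t : ℝ → ℝ, t = fun y => sinh (2 * y) / cosh (2 * y) := ⟨_, rfl⟩
  have htb : ∀ y, |t y| ≤ 1 := fun y => by rw [ht]; exact aux_tb y
  have htd : ∀ y, HasDerivAt t (2 * (1 - t y ^ 2)) y := fun y => by rw [ht]; exact aux_t y
  have htc : Continuous t := continuous_iff_continuousAt.2 fun y => (htd y).continuousAt
  have hte : ∀ y, sinh (2 * y) / cosh (2 * y) = t y := fun y => by rw [ht]
  have hsd : ∀ y, HasDerivAt (fun y : ℝ => 1 / cosh (2 * y)) (-2 * (1 / cosh (2 * y)) * t y) y :=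
    fun y => by rw [ht]; exact aux_s y
  simp only [hte]
  -- the antiderivative
  let P : ℝ → ℝ := fun y => 1 / 2 * (14 * t y - 15 * t y ^ 3 + t y * (3 * t y ^ 2 - 2))
    + t y * (3 * t y ^ 2 - 2)
    + 2 * (-6 * (t y / 4) + 9 * ((1 - t y ^ 2) * t y / 8 + 3 / 16 * t y))
  let Q : ℝ → ℝ := fun y => -14 * t y ^ 2 + 15 * t y ^ 4 - (3 * t y ^ 2 - 2) ^ 2 / 2
  have hPQ : ∃ C, ∀ y, |P y| ≤ C ∧ |Q y| ≤ C := by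
    open Polynomial in
    obtain ⟨C, hC⟩ := aux_bd (C (1 / 2) * (14 * X - 15 * X ^ 3 + X * (3 * X ^ 2 - 2))
      + X * (3 * X ^ 2 - 2)
      + 2 * (-6 * (C (1 / 4) * X) + 9 * ((1 - X ^ 2) * X * C (1 / 8) + C (3 / 16) * X)))
      (-14 * X ^ 2 + 15 * X ^ 4 - (3 * X ^ 2 - 2) ^ 2 * C (1 / 2)) t htb
    refine ⟨C, fun y => ?_⟩
    have := hC y
    simpa [P, Q, div_eq_mul_inv, mul_comm (t y) 4⁻¹] using this
  have hF : ∀ y, HasDerivAt (fun y => (P y + y * Q y) * (1 / cosh (2 * y))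
      + 11 / 8 * arctan (sinh (2 * y)))
      (((28 - 132 * t y ^ 2 + 105 * t y ^ 4) / 2
      + y * (-(t y) * (28 - 132 * t y ^ 2 + 105 * t y ^ 4))) * (1 / cosh (2 * y))) y := by
    intro y
    have h := htd y
    have hq : HasDerivAt (fun y => 3 * t y ^ 2 - 2) _ y := ((h.fun_pow 2).const_mul 3).sub_const 2
    have hP : HasDerivAt P _ y :=
      (((((h.const_mul 14).fun_sub ((h.fun_pow 3).const_mul 15)).fun_add
        (h.fun_mul hq)).const_mul (1 / 2)).fun_add (h.fun_mul hq)).fun_add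
        ((((h.div_const 4).const_mul (-6)).fun_add
          ((((((h.fun_pow 2).const_sub 1).fun_mul h).div_const 8).fun_add
            (h.const_mul (3 / 16))).const_mul 9)).const_mul 2)
    have hQ : HasDerivAt Q _ y :=
      (((h.fun_pow 2).const_mul (-14)).fun_add ((h.fun_pow 4).const_mul 15)).fun_sub
        ((hq.fun_pow 2).div_const 2)
    have hT := ((hP.fun_add ((hasDerivAt_id' y).fun_mul hQ)).fun_mul (hsd y)).fun_add
      ((aux_g y).const_mul (11 / 8))
    refine hT.congr_deriv ?_
    simp only [P, Q]
    push_cast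
    ring
  have hint := aux_int (fun y => (28 - 132 * t y ^ 2 + 105 * t y ^ 4) / 2)
    (fun y => -(t y) * (28 - 132 * t y ^ 2 + 105 * t y ^ 4)) (by fun_prop) (by fun_prop) (by
    open Polynomial in
    obtain ⟨C, hC⟩ := aux_bd ((28 - 132 * X ^ 2 + 105 * X ^ 4) * C (1 / 2))
      (-X * (28 - 132 * X ^ 2 + 105 * X ^ 4)) t htb
    refine ⟨C, fun y => ?_⟩
    have := hC y
    simpa [div_eq_mul_inv] using this)
  have hsq : Filter.Tendsto (fun y : ℝ => 1 + y ^ 2) Filter.atTop Filter.atTop :=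
    Filter.tendsto_atTop_add_const_left _ _ (Filter.tendsto_pow_atTop two_ne_zero)
  have hl1 : Filter.Tendsto (fun y : ℝ => 4 * (1 + y ^ 2)⁻¹) Filter.atTop (nhds 0) := by
    simpa using (hsq.inv_tendsto_atTop).const_mul 4
  have hl2 : Filter.Tendsto (fun y : ℝ => 4 * (1 + y ^ 2)⁻¹) Filter.atBot (nhds 0) := by
    have := hl1.comp Filter.tendsto_neg_atBot_atTop
    simpa [Function.comp_def] using this
  have hs1 : Filter.Tendsto (fun y : ℝ => arctan (sinh (2 * y))) Filter.atTop (nhds (π / 2)) := by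
    have h : Filter.Tendsto (fun y : ℝ => sinh (2 * y)) Filter.atTop Filter.atTop := by
      refine Filter.tendsto_atTop_mono' _ ?_ Filter.tendsto_id
      filter_upwards [Filter.eventually_ge_atTop 0] with y hy
      have := self_le_sinh_iff.2 (show 0 ≤ 2 * y by linarith)
      simp only [id]
      linarith
    exact (tendsto_nhds_of_tendsto_nhdsWithin tendsto_arctan_atTop).comp h
  have hs2 : Filter.Tendsto (fun y : ℝ => arctan (sinh (2 * y))) Filter.atBot
      (nhds (-(π / 2))) := by
    have := (hs1.comp Filter.tendsto_neg_atBot_atTop).neg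
    simpa [Function.comp_def] using this
  have := MeasureTheory.integral_of_hasDerivAt_of_tendsto hF hint
    ((aux_ys_top _ hl2 P Q hPQ).add (hs2.const_mul (11 / 8)))
    ((aux_ys_top _ hl1 P Q hPQ).add (hs1.const_mul (11 / 8)))
  rw [this]
  ring

/-- Explicit fourth-derivative integral of the quintic Townes soliton
`R(y) = 3^(1/4) sech(2y)^(1/2)` against `G(y) = -(1/2)(R(y)/2 + y R'(y))`:
`∫ R'''' · G = -(11√3/16)π`. -/
theorem townes_fourth_derivative_integral (R G : ℝ → ℝ)
    (hR : ∀ y : ℝ, R y = 3 ^ ((1 : ℝ) / 4) * (1 / Real.cosh (2 * y)) ^ ((1 : ℝ) / 2))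
    (hG : ∀ y : ℝ, G y = -(1 / 2) * (R y / 2 + y * deriv R y)) :
    ∫ y : ℝ, (deriv^[4] R) y * G y = -(11 * Real.sqrt 3 / 16) * Real.pi := by
  obtain ⟨d1, d4⟩ := aux_step R (fun y => sinh (2 * y) / cosh (2 * y)) aux_t (aux_R R hR)
  have hR2 : ∀ y, R y * R y = √3 * (1 / cosh (2 * y)) := by
    intro y
    have hp : 0 < 1 / cosh (2 * y) := by have := cosh_pos (2 * y); positivity
    have e1 : (3 : ℝ) ^ ((1 : ℝ) / 4) * 3 ^ ((1 : ℝ) / 4) = √3 := by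
      rw [← rpow_add (by norm_num), sqrt_eq_rpow]
      norm_num
    have e2 : (1 / cosh (2 * y)) ^ ((1 : ℝ) / 2) * (1 / cosh (2 * y)) ^ ((1 : ℝ) / 2)
        = 1 / cosh (2 * y) := by
      rw [← rpow_add hp]
      norm_num
    rw [hR, mul_mul_mul_comm, e1, e2]
  have key : ∀ y, (deriv^[4] R) y * G y = (-√3 / 2) * (((28 - 132 * (sinh (2 * y) / cosh (2 * y)) ^ 2
      + 105 * (sinh (2 * y) / cosh (2 * y)) ^ 4) / 2
      + y * (-(sinh (2 * y) / cosh (2 * y)) * (28 - 132 * (sinh (2 * y) / cosh (2 * y)) ^ 2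
      + 105 * (sinh (2 * y) / cosh (2 * y)) ^ 4))) * (1 / cosh (2 * y))) := by
    intro y
    rw [d4, hG, d1]
    beta_reduce
    have h := hR2 y
    generalize sinh (2 * y) / cosh (2 * y) = t
    generalize 1 / cosh (2 * y) = s at *
    linear_combination (-(1 / 2) * (28 - 132 * t ^ 2 + 105 * t ^ 4) * (1 / 2 - y * t)) * h
  simp only [key]
  rw [MeasureTheory.integral_const_mul, aux_main]
  ring
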